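/- Let α > 0, θ ∈ [0,1], t₀ > 0 and γ > 2, and set r = (1 + θ)/2. Let x : [t₀, ∞) → ℝⁿ be a solution of the perturbed inertial ODE with damping α/t^θ. Assume that ∫_{t₀}^∞ t^{rγ/(γ − 2)} ‖g(t)‖ dt < ∞, that F satisfies hypotheses H1(γ) and H2(γ) and admits a unique minimizer, that either (θ = 1 and α ≥ (γ + 2)/(γ − 2)) or θ < 1, and additionally that rγ/(γ − 2) > 1. Then ∫_{t₀}^∞ ‖x'(t)‖ dt < ∞, i.e. the trajectory t ↦ x(t) has finite length. -/

import Mathlib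

open MeasureTheory
open scoped RealInnerProductSpace

/-!
For a minimizer `z` and parameters `p`, `l`, consider the Lyapunov function
`t ^ (2 p) * (F x - F z + ‖u‖² / 2 + c ‖x - z‖² / 2)` with `u = x' + (l / t) (x - z)`.
Choosing `c = l (l + 1) / t² - l α / t ^ (θ + 1)` gives `u' = g - ∇F(x) - (α / t ^ θ - l / t) u -
c (x - z)`, so all mixed terms cancel in the derivative. Up to nonpositive terms it equals
`t ^ (2 p) ⟪g, u⟫ + l α ((1 + θ) / 2 + l - p) t ^ (2 p - θ - 2) ‖x - z‖²`, provided that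
`2 p (F x - F z) ≤ l ⟪∇F(x), x - z⟫`, `(p + l) / t ≤ α / t ^ θ` and `p ≤ l + 1`.

* `p = l = 0` is the mechanical energy: it is bounded, and convexity and growth turn this into
  boundedness of the trajectory.
* `l = 2 p` with `p` small needs only convexity; the remainder is integrable because `2 p < 1 + θ`,
  so `F x - F z = O(t ^ (-2 p))` and `x` converges to `z`.
* Near `z` the geometric hypotheses apply. For the balanced choice `l = (1 + θ) / (γ - 2)` and
  `p = (1 + θ) / 2 + l` the remainder vanishes and `2 p = l γ`, so the growth of `F` absorbs the
  negative part of `c`. This bounds `t ^ p ‖u‖` and `t ^ l ‖x - z‖`, whence `x' = O(t ^ (-p))`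
  because `p ≤ l + 1`; this is integrable since `p = r γ / (γ - 2) > 1`.
-/

open Filter Set
open scoped Topology

theorem exists_forall_le_of_hasDerivAt_le_mul_one_add {E E' φ : ℝ → ℝ} {T : ℝ}
    (hE : ∀ t, T ≤ t → HasDerivAt E (E' t) t) (hE0 : ∀ t, T ≤ t → 0 ≤ E t)
    (hφ : IntegrableOn φ (Ici T)) (hφ0 : ∀ t, T ≤ t → 0 ≤ φ t)
    (hle : ∀ t, T ≤ t → E' t ≤ φ t * (1 + E t)) :
    ∃ M, ∀ t, T ≤ t → E t ≤ M := by
  have hpos : ∀ t, T ≤ t → 0 < 1 + E t := fun t ht => by linarith [hE0 t ht]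
  have hlog : ∀ t, T ≤ t →
      HasDerivAt (fun s => Real.log (1 + E s)) (E' t / (1 + E t)) t := fun t ht =>
    ((hE t ht).const_add 1).log (hpos t ht).ne'
  refine ⟨Real.exp (Real.log (1 + E T) + ∫ s in Ici T, φ s), fun t ht => ?_⟩
  have hincr : Real.log (1 + E t) - Real.log (1 + E T) ≤ ∫ s in T..t, φ s :=
    intervalIntegral.sub_le_integral_of_hasDeriv_right_of_le ht
      (fun s hs => (hlog s hs.1).continuousAt.continuousWithinAt)
      (fun s hs => (hlog s hs.1.le).hasDerivWithinAt) (hφ.mono_set Icc_subset_Ici_self)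
      (fun s hs => (div_le_iff₀ (hpos s hs.1.le)).2 (hle s hs.1.le))
  have htail : ∫ s in T..t, φ s ≤ ∫ s in Ici T, φ s := by
    rw [intervalIntegral.integral_of_le ht]
    exact setIntegral_mono_set hφ ((ae_restrict_iff' measurableSet_Ici).2 (.of_forall hφ0))
      (Ioc_subset_Icc_self.trans Icc_subset_Ici_self).eventuallyLE
  have hlog_le : Real.log (1 + E t) ≤ Real.log (1 + E T) + ∫ s in Ici T, φ s := by linarith
  linarith [(Real.log_le_iff_le_exp (hpos t ht)).1 hlog_le]

theorem exists_forall_le_of_hasDerivAt_le_mul_add {E E' a ω ψ : ℝ → ℝ} {T : ℝ}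
    (hE : ∀ t, T ≤ t → HasDerivAt E (E' t) t) (hω : ∀ t, T ≤ t → ω t ^ 2 / 2 ≤ E t)
    (ha : IntegrableOn a (Ici T)) (ha0 : ∀ t, T ≤ t → 0 ≤ a t)
    (hψ : IntegrableOn ψ (Ici T)) (hψ0 : ∀ t, T ≤ t → 0 ≤ ψ t)
    (hle : ∀ t, T ≤ t → E' t ≤ a t * ω t + ψ t) :
    ∃ M, ∀ t, T ≤ t → E t ≤ M := by
  have hE0 : ∀ t, T ≤ t → 0 ≤ E t := fun t ht => (by positivity : 0 ≤ ω t ^ 2 / 2).trans (hω t ht)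
  refine exists_forall_le_of_hasDerivAt_le_mul_one_add hE hE0 (ha.add hψ)
    (fun t ht => add_nonneg (ha0 t ht) (hψ0 t ht)) fun t ht => ?_
  have hω_le : ω t ≤ 1 + E t := by nlinarith [hω t ht, sq_nonneg (ω t - 1)]
  calc E' t ≤ a t * ω t + ψ t * 1 := by rw [mul_one]; exact hle t ht
    _ ≤ a t * (1 + E t) + ψ t * (1 + E t) :=
      add_le_add (mul_le_mul_of_nonneg_left hω_le (ha0 t ht))
        (mul_le_mul_of_nonneg_left (le_add_of_nonneg_right (hE0 t ht)) (hψ0 t ht))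
    _ = (a t + ψ t) * (1 + E t) := (add_mul _ _ _).symm

theorem exists_forall_mul_rpow_le_mul_rpow_add {c K β γ : ℝ} (hc : 0 ≤ c) (hK : 0 < K)
    (hβ : 0 ≤ β) (hβγ : β < γ) :
    ∃ C, ∀ s, 0 ≤ s → c * s ^ β ≤ K * s ^ γ + C := by
  have hexp : 0 < γ - β := sub_pos.2 hβγ
  set S := (c / K) ^ (γ - β)⁻¹ with hS
  have : 0 ≤ S := by positivity
  refine ⟨c * S ^ β, fun s hs => ?_⟩
  rcases le_total s S with hsS | hSs
  · calc c * s ^ β ≤ c * S ^ β := by gcongr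
      _ ≤ K * s ^ γ + c * S ^ β := le_add_of_nonneg_left (by positivity)
  · have hcK : c ≤ K * s ^ (γ - β) := by
      rwa [hS, Real.rpow_inv_le_iff_of_pos (by positivity) hs hexp, div_le_iff₀' hK] at hSs
    calc c * s ^ β ≤ K * s ^ (γ - β) * s ^ β := by gcongr
      _ = K * s ^ γ := by
        rw [mul_assoc, ← Real.rpow_add_of_nonneg hs hexp.le hβ, sub_add_cancel]
      _ ≤ K * s ^ γ + c * S ^ β := le_add_of_nonneg_right (by positivity)

theorem integrableOn_Ici_rpow_mul_of_le {f : ℝ → ℝ} {p q T : ℝ} (hT : 1 ≤ T) (hpq : p ≤ q)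
    (hf : IntegrableOn (fun t => t ^ q * f t) (Ici T)) :
    IntegrableOn (fun t => t ^ p * f t) (Ici T) := by
  have hle : ∀ᵐ t ∂volume.restrict (Ici T), ‖t ^ (p - q)‖ ≤ 1 :=
    (ae_restrict_iff' measurableSet_Ici).2 <| .of_forall fun t ht => by
      have ht1 : 1 ≤ t := hT.trans ht
      rw [Real.norm_of_nonneg (by positivity)]
      exact Real.rpow_le_one_of_one_le_of_nonpos ht1 (sub_nonpos.2 hpq)
  refine IntegrableOn.congr_fun (hf.bdd_mul (by fun_prop) hle) (fun t ht => ?_) measurableSet_Ici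
  have ht0 : 0 < t := zero_lt_one.trans_le (hT.trans ht)
  simp only [← mul_assoc, ← Real.rpow_add ht0, sub_add_cancel]

section Convex

variable {H : Type*} [NormedAddCommGroup H]

theorem sub_le_inner_gradient_of_convexOn [InnerProductSpace ℝ H] [CompleteSpace H] {F : H → ℝ}
    (hconv : ConvexOn ℝ univ F) {y : H} (hF : DifferentiableAt ℝ F y) (z : H) :
    F y - F z ≤ ⟪gradient F y, y - z⟫ := by
  let γ : ℝ →ᵃ[ℝ] H := AffineMap.lineMap y z
  have hline : ConvexOn ℝ univ (F ∘ γ) := hconv.comp_affineMap γ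
  have hderiv : HasDerivAt (F ∘ γ) (fderiv ℝ F y (z - y)) 0 := by
    have hF0 : HasFDerivAt F (fderiv ℝ F y) (γ 0) := by
      rw [AffineMap.lineMap_apply_zero]; exact hF.hasFDerivAt
    exact hF0.comp_hasDerivAt 0 AffineMap.hasDerivAt_lineMap
  have hslope := hline.le_slope_of_hasDerivAt (mem_univ 0) (mem_univ 1) one_pos hderiv
  simp only [slope_def_field, Function.comp_apply, γ, AffineMap.lineMap_apply_zero,
    AffineMap.lineMap_apply_one, sub_zero, div_one] at hslope
  rw [← neg_sub z y, inner_neg_right, inner_gradient_left]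
  linarith

variable [NormedSpace ℝ H] {F : H → ℝ} {z : H}

theorem mul_norm_sub_le_of_forall_norm_sub_eq (hconv : ConvexOn ℝ univ F) {m δ : ℝ} (hδ : 0 < δ)
    (hm : ∀ y, ‖y - z‖ = δ → m ≤ F y - F z) {y : H} (hy : δ ≤ ‖y - z‖) :
    m * ‖y - z‖ ≤ δ * (F y - F z) := by
  have hy0 : 0 < ‖y - z‖ := hδ.trans_le hy
  set s := δ / ‖y - z‖ with hs
  have hs0 : 0 ≤ s := by positivity
  have hsphere : ‖(1 - s) • z + s • y - z‖ = δ := by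
    rw [show (1 - s) • z + s • y - z = s • (y - z) by module, norm_smul,
      Real.norm_of_nonneg hs0, hs, div_mul_cancel₀ _ hy0.ne']
  have hchord : F ((1 - s) • z + s • y) ≤ (1 - s) * F z + s * F y :=
    hconv.2 (mem_univ z) (mem_univ y) (sub_nonneg.2 ((div_le_one hy0).2 hy)) hs0 (by ring)
  have hms : m ≤ s * (F y - F z) := by linarith [hm _ hsphere]
  calc m * ‖y - z‖ ≤ s * (F y - F z) * ‖y - z‖ := by gcongr
    _ = δ * (F y - F z) := by rw [hs]; field_simp

/-- Local growth of order `γ` at the point `z`: hypothesis H2 when `z` is the only minimizer, so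
that `‖y - z‖` is the distance to the set of minimizers. -/
def HasGrowthAt (F : H → ℝ) (γ : ℝ) (z : H) : Prop :=
  ∃ K > 0, ∀ᶠ y in 𝓝 z, K * ‖y - z‖ ^ γ ≤ F y - F z

theorem HasGrowthAt.le {γ : ℝ} (hF : HasGrowthAt F γ z) (hconv : ConvexOn ℝ univ F) (y : H) :
    F z ≤ F y := by
  obtain ⟨K, hK, hgrowth⟩ := hF
  refine IsMinOn.of_isLocalMin_of_convex_univ ?_ hconv y
  filter_upwards [hgrowth] with w hw
  have : 0 ≤ K * ‖w - z‖ ^ γ := by positivity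
  linarith

theorem HasGrowthAt.exists_mul_norm_sub_le {γ : ℝ} (hF : HasGrowthAt F γ z)
    (hconv : ConvexOn ℝ univ F) {ε : ℝ} (hε : 0 < ε) :
    ∃ m > 0, ∀ y, ε ≤ ‖y - z‖ → m * ‖y - z‖ ≤ F y - F z := by
  obtain ⟨K, hK, hgrowth⟩ := hF
  obtain ⟨η, hη, hball⟩ := Metric.eventually_nhds_iff.1 hgrowth
  obtain ⟨δ, hδ, hδlt⟩ := exists_between (lt_min hε hη)
  have hsphere : ∀ y, ‖y - z‖ = δ → K * δ ^ γ ≤ F y - F z := fun y hy => by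
    simpa only [hy] using hball (y := y) (by
      rw [dist_eq_norm, hy]; exact hδlt.trans_le (min_le_right _ _))
  refine ⟨K * δ ^ γ / δ, by positivity, fun y hy => ?_⟩
  rw [div_mul_eq_mul_div, div_le_iff₀' hδ]
  exact mul_norm_sub_le_of_forall_norm_sub_eq hconv hδ hsphere
    ((hδlt.le.trans (min_le_left _ _)).trans hy)

theorem HasGrowthAt.exists_norm_sub_le {γ : ℝ} (hF : HasGrowthAt F γ z)
    (hconv : ConvexOn ℝ univ F) (M : ℝ) :
    ∃ R, ∀ y, F y - F z ≤ M → ‖y - z‖ ≤ R := by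
  obtain ⟨m, hm, hlin⟩ := hF.exists_mul_norm_sub_le hconv one_pos
  refine ⟨max 1 (M / m), fun y hy => ?_⟩
  rcases le_total ‖y - z‖ 1 with h | h
  · exact h.trans (le_max_left _ _)
  · exact le_max_of_le_right ((le_div_iff₀' hm).2 ((hlin y h).trans hy))

theorem HasGrowthAt.tendsto {γ : ℝ} (hF : HasGrowthAt F γ z) (hconv : ConvexOn ℝ univ F)
    {ι : Type*} {f : Filter ι} {x : ι → H} (hx : Tendsto (fun i => F (x i)) f (𝓝 (F z))) :
    Tendsto x f (𝓝 z) := by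
  refine Metric.tendsto_nhds.2 fun ε hε => ?_
  obtain ⟨m, hm, hlin⟩ := hF.exists_mul_norm_sub_le hconv hε
  filter_upwards [hx.eventually_lt_const (lt_add_of_pos_right (F z) (mul_pos hm hε))] with i hi
  rw [dist_eq_norm]
  by_contra! hfar
  have : m * ε ≤ m * ‖x i - z‖ := by gcongr
  linarith [hlin _ hfar]

end Convex

section Inertial

variable {H : Type*} [NormedAddCommGroup H] [InnerProductSpace ℝ H]

/-- The velocity corrected by a drift of rate `l / t` towards `z`: it is
`t ^ (-l)` times the derivative of `t ^ l (x - z)`. -/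
noncomputable def driftedVelocity (z : H) (l : ℝ) (x v : ℝ → H) (t : ℝ) : H :=
  v t + (l / t) • (x t - z)

/-- The coefficient of `x - z` in the second-order equation rewritten for the drifted velocity, see
`IsInertialTrajectory.hasDerivAt_driftedVelocity`. -/
noncomputable def driftStiffness (α θ l t : ℝ) : ℝ :=
  l * (l + 1) / t ^ 2 - l * (α / t ^ θ) / t

/-- The Lyapunov function: `t ^ (2 * p)` times the mechanical energy computed with the drifted
velocity and with an additional elastic term of stiffness `driftStiffness`. -/
noncomputable def lyapunov (F : H → ℝ) (α θ : ℝ) (z : H) (p l : ℝ) (x v : ℝ → H) (t : ℝ) : ℝ :=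
  t ^ (2 * p) * (F (x t) - F z + ‖driftedVelocity z l x v t‖ ^ 2 / 2
    + driftStiffness α θ l t * ‖x t - z‖ ^ 2 / 2)

theorem hasDerivAt_const_div_rpow (α θ : ℝ) {t : ℝ} (ht : 0 < t) :
    HasDerivAt (fun s => α / s ^ θ) (-(θ * (α / t ^ θ) / t)) t := by
  have hθ : 0 < t ^ θ := by positivity
  refine ((hasDerivAt_const t α).div ((hasDerivAt_id' t).rpow_const (Or.inl ht.ne'))
    hθ.ne').congr_deriv ?_
  rw [Real.rpow_sub_one ht.ne']
  field_simp
  ring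

theorem hasDerivAt_driftStiffness (α θ l : ℝ) {t : ℝ} (ht : 0 < t) :
    HasDerivAt (driftStiffness α θ l)
      (l * (α / t ^ θ) * (1 + θ) / t ^ 2 - 2 * (l * (l + 1)) / t ^ 3) t := by
  refine (((hasDerivAt_const t (l * (l + 1))).div (hasDerivAt_pow 2 t)
    (pow_ne_zero 2 ht.ne')).sub (((hasDerivAt_const_div_rpow α θ ht).const_mul l).div
      (hasDerivAt_id' t) ht.ne')).congr_deriv ?_
  field_simp
  ring

theorem norm_le_norm_driftedVelocity_add (z : H) {l : ℝ} (hl : 0 ≤ l) (x v : ℝ → H) {t : ℝ}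
    (ht : 0 ≤ t) : ‖v t‖ ≤ ‖driftedVelocity z l x v t‖ + l / t * ‖x t - z‖ := by
  have hsub := norm_sub_le (driftedVelocity z l x v t) ((l / t) • (x t - z))
  rwa [driftedVelocity, add_sub_cancel_right, norm_smul, Real.norm_of_nonneg (by positivity)]
    at hsub

theorem isBigO_velocity_of_driftedVelocity_le {z : H} {x v : ℝ → H} {T p l A B : ℝ} (hT : 1 ≤ T)
    (hl : 0 ≤ l) (hpl : p ≤ l + 1) (hA : ∀ t, T ≤ t → t ^ p * ‖driftedVelocity z l x v t‖ ≤ A)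
    (hB : ∀ t, T ≤ t → t ^ l * ‖x t - z‖ ≤ B) :
    v =O[atTop] fun t => t ^ (-p) := by
  refine .of_bound (A + l * B) ?_
  filter_upwards [eventually_ge_atTop T] with t ht
  have ht0 : 0 < t := by linarith
  have hshift : t ^ (p - 1) ≤ t ^ l := Real.rpow_le_rpow_of_exponent_le (hT.trans ht) (by linarith)
  rw [Real.norm_of_nonneg (by positivity), Real.rpow_neg ht0.le, ← div_eq_mul_inv,
    le_div_iff₀' (by positivity)]
  calc t ^ p * ‖v t‖
      ≤ t ^ p * (‖driftedVelocity z l x v t‖ + l / t * ‖x t - z‖) := by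
        gcongr
        exact norm_le_norm_driftedVelocity_add z hl x v ht0.le
    _ = t ^ p * ‖driftedVelocity z l x v t‖ + l * (t ^ (p - 1) * ‖x t - z‖) := by
        rw [Real.rpow_sub_one ht0.ne']
        ring
    _ ≤ t ^ p * ‖driftedVelocity z l x v t‖ + l * (t ^ l * ‖x t - z‖) := by gcongr
    _ ≤ A + l * B := by
        gcongr
        · exact hA t ht
        · exact hB t ht

theorem le_lyapunov_add (F : H → ℝ) (α θ : ℝ) (z : H) (p : ℝ) {l : ℝ} (hl : 0 ≤ l) (x v : ℝ → H)
    {t : ℝ} (ht : 0 < t) :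
    t ^ (2 * p) * (F (x t) - F z + ‖driftedVelocity z l x v t‖ ^ 2 / 2) ≤
      lyapunov F α θ z p l x v t + l * α / 2 * t ^ (2 * p - θ - 1) * ‖x t - z‖ ^ 2 := by
  have hstiff : 0 ≤ t ^ (2 * p) * (l * (l + 1) / t ^ 2) * ‖x t - z‖ ^ 2 := by positivity
  rw [lyapunov, driftStiffness, Real.rpow_sub_one ht.ne', Real.rpow_sub ht]
  linear_combination hstiff / 2

variable [CompleteSpace H]

/-- `x` solves `x'' + (α / t ^ θ) x' + ∇F(x) = g` on `[T, ∞)` with velocity `v`, written as a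
first-order system. -/
structure IsInertialTrajectory (F : H → ℝ) (α θ : ℝ) (g : ℝ → H) (T : ℝ) (x v : ℝ → H) : Prop where
  hasDerivAt_position : ∀ t, T ≤ t → HasDerivAt x (v t) t
  hasDerivAt_velocity : ∀ t, T ≤ t →
    HasDerivAt v (g t - (α / t ^ θ) • v t - gradient F (x t)) t

variable {F : H → ℝ} {α θ T : ℝ} {g x v : ℝ → H} {z : H}

namespace IsInertialTrajectory

theorem mono {T' : ℝ} (h : IsInertialTrajectory F α θ g T x v) (hT : T ≤ T') :
    IsInertialTrajectory F α θ g T' x v :=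
  ⟨fun t ht => h.1 t (hT.trans ht), fun t ht => h.2 t (hT.trans ht)⟩

theorem hasDerivAt_driftedVelocity (h : IsInertialTrajectory F α θ g T x v) (z : H) (l : ℝ) {t : ℝ}
    (hTt : T ≤ t) (ht : 0 < t) :
    HasDerivAt (driftedVelocity z l x v)
      (g t - gradient F (x t) - (α / t ^ θ - l / t) • driftedVelocity z l x v t
        - driftStiffness α θ l t • (x t - z)) t := by
  have hdrift : HasDerivAt (fun s => l / s) (-(l / t ^ 2)) t := by
    simpa [div_eq_mul_inv] using (hasDerivAt_inv ht.ne').const_mul l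
  refine ((h.hasDerivAt_velocity t hTt).add
    (hdrift.smul ((h.hasDerivAt_position t hTt).sub_const z))).congr_deriv ?_
  unfold driftedVelocity driftStiffness
  module

theorem hasDerivAt_lyapunov (h : IsInertialTrajectory F α θ g T x v) (z : H) (p l : ℝ) {t : ℝ}
    (hF : DifferentiableAt ℝ F (x t)) (hTt : T ≤ t) (ht : 0 < t) :
    HasDerivAt (lyapunov F α θ z p l x v)
      (t ^ (2 * p) * (⟪g t, driftedVelocity z l x v t⟫
        - (α / t ^ θ - (p + l) / t) * ‖driftedVelocity z l x v t‖ ^ 2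
        - (l * ⟪gradient F (x t), x t - z⟫ - 2 * p * (F (x t) - F z)) / t
        + l * (α / t ^ θ) * ((1 + θ) / 2 + l - p) / t ^ 2 * ‖x t - z‖ ^ 2
        - l * (l + 1) * (l + 1 - p) / t ^ 3 * ‖x t - z‖ ^ 2)) t := by
  have hx := h.hasDerivAt_position t hTt
  have hFx : HasDerivAt (fun s => F (x s)) ⟪gradient F (x t), v t⟫ t := by
    rw [inner_gradient_left]
    exact hF.hasFDerivAt.comp_hasDerivAt t hx
  have hweight : HasDerivAt (fun s => s ^ (2 * p)) (t ^ (2 * p) * (2 * p / t)) t := by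
    refine ((hasDerivAt_id' t).rpow_const (Or.inl ht.ne')).congr_deriv ?_
    rw [Real.rpow_sub_one ht.ne']
    ring
  have hv : v t = driftedVelocity z l x v t - (l / t) • (x t - z) := by
    rw [driftedVelocity, add_sub_cancel_right]
  refine (hweight.mul (((hFx.sub_const (F z)).add
    ((h.hasDerivAt_driftedVelocity z l hTt ht).norm_sq.div_const 2)).add
      (((hasDerivAt_driftStiffness α θ l ht).mul (hx.sub_const z).norm_sq).div_const
        2))).congr_deriv ?_
  rw [hv]
  simp only [Pi.add_apply, Pi.mul_apply]
  generalize x t - z = y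
  simp only [inner_sub_right, real_inner_smul_right,
    real_inner_self_eq_norm_sq, driftStiffness]
  rw [real_inner_comm (g t), real_inner_comm (gradient F (x t)) (driftedVelocity z l x v t),
    real_inner_comm y (driftedVelocity z l x v t)]
  field_simp
  ring

theorem exists_hasDerivAt_lyapunov_le (h : IsInertialTrajectory F α θ g T x v)
    {p l t : ℝ} (hF : DifferentiableAt ℝ F (x t)) (hl : 0 ≤ l) (hpl : p ≤ l + 1) (hTt : T ≤ t)
    (ht : 0 < t) (hdamp : (p + l) / t ≤ α / t ^ θ)
    (hgrad : 2 * p * (F (x t) - F z) ≤ l * ⟪gradient F (x t), x t - z⟫) :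
    ∃ L' ≤ t ^ p * ‖g t‖ * (t ^ p * ‖driftedVelocity z l x v t‖)
        + l * α * ((1 + θ) / 2 + l - p) * t ^ (2 * p - θ - 2) * ‖x t - z‖ ^ 2,
      HasDerivAt (lyapunov F α θ z p l x v) L' t := by
  refine ⟨_, ?_, h.hasDerivAt_lyapunov z p l hF hTt ht⟩
  have hsplit : t ^ p * ‖g t‖ * (t ^ p * ‖driftedVelocity z l x v t‖)
      + l * α * ((1 + θ) / 2 + l - p) * t ^ (2 * p - θ - 2) * ‖x t - z‖ ^ 2 =
      t ^ (2 * p) * (‖g t‖ * ‖driftedVelocity z l x v t‖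
        + l * (α / t ^ θ) * ((1 + θ) / 2 + l - p) / t ^ 2 * ‖x t - z‖ ^ 2) := by
    rw [Real.rpow_sub ht, Real.rpow_sub ht, Real.rpow_two, two_mul, Real.rpow_add ht]
    ring
  rw [hsplit]
  gcongr
  have hinner := real_inner_le_norm (g t) (driftedVelocity z l x v t)
  have hfriction : 0 ≤ (α / t ^ θ - (p + l) / t) * ‖driftedVelocity z l x v t‖ ^ 2 :=
    mul_nonneg (sub_nonneg.2 hdamp) (sq_nonneg _)
  have hdescent : 0 ≤ (l * ⟪gradient F (x t), x t - z⟫ - 2 * p * (F (x t) - F z)) / t :=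
    div_nonneg (sub_nonneg.2 hgrad) ht.le
  have hstiff : 0 ≤ l * (l + 1) * (l + 1 - p) / t ^ 3 * ‖x t - z‖ ^ 2 := by
    have := sub_nonneg.2 hpl
    positivity
  linarith

theorem exists_forall_rpow_mul_energy_le (h : IsInertialTrajectory F α θ g T x v)
    (hF : Differentiable ℝ F) (hT : 0 < T) (hmin : ∀ t, T ≤ t → F z ≤ F (x t)) {p l C : ℝ}
    {ψ : ℝ → ℝ} (hl : 0 ≤ l) (hpl : p ≤ l + 1) (hdamp : ∀ t, T ≤ t → (p + l) / t ≤ α / t ^ θ)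
    (hgrad : ∀ t, T ≤ t → 2 * p * (F (x t) - F z) ≤ l * ⟪gradient F (x t), x t - z⟫)
    (hg : IntegrableOn (fun t => t ^ p * ‖g t‖) (Ici T))
    (hψ : IntegrableOn ψ (Ici T)) (hψ0 : ∀ t, T ≤ t → 0 ≤ ψ t)
    (hrem : ∀ t, T ≤ t →
      l * α * ((1 + θ) / 2 + l - p) * t ^ (2 * p - θ - 2) * ‖x t - z‖ ^ 2 ≤ ψ t)
    (hlow : ∀ t, T ≤ t → l * α / 2 * t ^ (2 * p - θ - 1) * ‖x t - z‖ ^ 2 ≤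
      t ^ (2 * p) * (F (x t) - F z) / 2 + C) :
    ∃ M, ∀ t, T ≤ t →
      t ^ (2 * p) * (F (x t) - F z + ‖driftedVelocity z l x v t‖ ^ 2) ≤ M := by
  have hpos : ∀ t, T ≤ t → 0 < t := fun t => hT.trans_le
  have hcoercive : ∀ t, T ≤ t →
      t ^ (2 * p) * (F (x t) - F z + ‖driftedVelocity z l x v t‖ ^ 2) / 2 ≤
        lyapunov F α θ z p l x v t + C := fun t ht => by
    linarith [le_lyapunov_add F α θ z p hl x v (hpos t ht), hlow t ht]
  have hkinetic : ∀ t, T ≤ t → (t ^ p * ‖driftedVelocity z l x v t‖) ^ 2 / 2 ≤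
      lyapunov F α θ z p l x v t + C := fun t ht => by
    have hgap : 0 ≤ t ^ (2 * p) * (F (x t) - F z) :=
      mul_nonneg (Real.rpow_nonneg (hpos t ht).le _) (sub_nonneg.2 (hmin t ht))
    rw [mul_pow, ← Real.rpow_mul_natCast (hpos t ht).le, Nat.cast_ofNat, mul_comm p]
    linarith [hcoercive t ht]
  choose! L' hL'le hL' using fun t ht =>
    h.exists_hasDerivAt_lyapunov_le (hF (x t)) hl hpl ht (hpos t ht) (hdamp t ht) (hgrad t ht)
  obtain ⟨M, hM⟩ := exists_forall_le_of_hasDerivAt_le_mul_add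
    (fun t ht => (hL' t ht).add_const C) hkinetic hg
    (fun t ht => by have := hpos t ht; positivity) hψ hψ0
    (fun t ht => (hL'le t ht).trans (by linarith [hrem t ht]))
  exact ⟨2 * M, fun t ht => by linarith [hcoercive t ht, hM t ht]⟩

theorem exists_forall_norm_position_sub_le (h : IsInertialTrajectory F α θ g T x v)
    (hF : Differentiable ℝ F) (hconv : ConvexOn ℝ univ F) {γ : ℝ} (hgrowth : HasGrowthAt F γ z)
    (hα : 0 ≤ α) (hT : 0 < T) (hg : IntegrableOn (fun t => ‖g t‖) (Ici T)) :
    ∃ R, ∀ t, T ≤ t → ‖x t - z‖ ≤ R := by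
  have hmin := hgrowth.le hconv
  obtain ⟨M, hM⟩ := h.exists_forall_rpow_mul_energy_le (p := 0) (l := 0) (C := 0) (ψ := 0) hF hT
    (fun t _ => hmin (x t)) le_rfl (by norm_num)
    (hdamp := fun t ht => by have := hT.trans_le ht; rw [add_zero, zero_div]; positivity)
    (hgrad := fun t _ => by simp only [mul_zero, zero_mul, le_refl])
    (hg := by simpa only [Real.rpow_zero, one_mul] using hg)
    (hψ := integrableOn_zero) (hψ0 := fun _ _ => le_rfl)
    (hrem := fun t _ => by simp only [zero_mul, Pi.zero_apply, le_refl])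
    (hlow := fun t _ => by
      simp only [mul_zero, zero_mul, zero_div, Real.rpow_zero, one_mul, add_zero]
      linarith [hmin (x t)])
  obtain ⟨R, hR⟩ := hgrowth.exists_norm_sub_le hconv M
  refine ⟨R, fun t ht => hR _ ?_⟩
  have henergy := hM t ht
  rw [mul_zero, Real.rpow_zero, one_mul] at henergy
  linarith [sq_nonneg ‖driftedVelocity z 0 x v t‖]

theorem exists_forall_rpow_mul_sub_le_of_norm_le (h : IsInertialTrajectory F α θ g T x v)
    (hF : Differentiable ℝ F) (hconv : ConvexOn ℝ univ F) (hT : 1 ≤ T)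
    (hmin : ∀ t, T ≤ t → F z ≤ F (x t)) (hθ : θ ≤ 1) {p R : ℝ} (hp : 0 ≤ p) (hpα : 3 * p ≤ α)
    (hpθ : 2 * p < 1 + θ) (hR : ∀ t, T ≤ t → ‖x t - z‖ ≤ R)
    (hg : IntegrableOn (fun t => t ^ p * ‖g t‖) (Ici T)) :
    ∃ M, ∀ t, T ≤ t → t ^ (2 * p) * (F (x t) - F z) ≤ M := by
  have hpos : ∀ t, T ≤ t → 0 < t := fun t ht => by linarith
  have hα : 0 ≤ α := by linarith
  have hcoef : 0 ≤ (1 + θ) / 2 + 2 * p - p := by linarith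
  have hdamp : ∀ t, T ≤ t → (p + 2 * p) / t ≤ α / t ^ θ := fun t ht => by
    have ht0 := hpos t ht
    calc (p + 2 * p) / t ≤ α / t := by gcongr; linarith
      _ ≤ α / t ^ θ := by gcongr; exact Real.rpow_le_self_of_one_le (hT.trans ht) hθ
  have htail : IntegrableOn (fun t => t ^ (2 * p - θ - 2)) (Ici T) :=
    (integrableOn_Ioi_rpow_of_lt (by linarith) (by linarith)).congr_set_ae Ioi_ae_eq_Ici.symm
  obtain ⟨M, hM⟩ := h.exists_forall_rpow_mul_energy_le (p := p) (l := 2 * p)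
    (C := 2 * p * α / 2 * 1 * R ^ 2)
    (ψ := fun t => 2 * p * α * ((1 + θ) / 2 + 2 * p - p) * t ^ (2 * p - θ - 2) * R ^ 2)
    hF (by linarith) hmin (by linarith) (by linarith) hdamp
    (hgrad := fun t _ => mul_le_mul_of_nonneg_left
      (sub_le_inner_gradient_of_convexOn hconv (hF _) z) (by positivity))
    hg (hψ := (htail.const_mul _).mul_const _)
    (hψ0 := fun t ht => by have := hpos t ht; positivity)
    (hrem := fun t ht => by have := hpos t ht; gcongr; exact hR t ht)
    (hlow := fun t ht => by
      have ht0 := hpos t ht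
      have hgap := sub_nonneg.2 (hmin t ht)
      refine le_add_of_nonneg_of_le (by positivity) ?_
      gcongr
      · exact Real.rpow_le_one_of_one_le_of_nonpos (hT.trans ht) (by linarith)
      · exact hR t ht)
  refine ⟨M, fun t ht => le_trans ?_ (hM t ht)⟩
  have := hpos t ht
  gcongr
  exact le_add_of_nonneg_right (sq_nonneg _)

theorem tendsto_position (h : IsInertialTrajectory F α θ g T x v)
    (hF : Differentiable ℝ F) (hconv : ConvexOn ℝ univ F) {γ : ℝ} (hgrowth : HasGrowthAt F γ z)
    (hα : 0 < α) (hθ : -1 < θ) (hθ1 : θ ≤ 1) (hT : 1 ≤ T) {q : ℝ} (hq : 0 < q)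
    (hg : IntegrableOn (fun t => t ^ q * ‖g t‖) (Ici T)) :
    Tendsto x atTop (𝓝 z) := by
  obtain ⟨R, hR⟩ := h.exists_forall_norm_position_sub_le hF hconv hgrowth hα.le (by linarith)
    (by simpa only [Real.rpow_zero, one_mul] using integrableOn_Ici_rpow_mul_of_le hT hq.le hg)
  obtain ⟨p, hp, hpmin⟩ := exists_between
    (lt_min hq (lt_min (div_pos hα three_pos) (div_pos (neg_lt_iff_pos_add'.1 hθ) two_pos)))
  simp only [lt_min_iff] at hpmin
  obtain ⟨hpq, hpα, hpθ⟩ := hpmin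
  obtain ⟨M, hM⟩ := h.exists_forall_rpow_mul_sub_le_of_norm_le hF hconv hT
    (fun t _ => hgrowth.le hconv (x t)) hθ1 hp.le (by linarith) (by linarith) hR
    (integrableOn_Ici_rpow_mul_of_le hT hpq.le hg)
  have hdecay : Tendsto (fun t => M * t ^ (-(2 * p))) atTop (𝓝 0) := by
    simpa only [mul_zero] using
      (tendsto_rpow_neg_atTop (mul_pos two_pos hp)).const_mul M
  have hgap : Tendsto (fun t => F (x t) - F z) atTop (𝓝 0) := by
    refine squeeze_zero' (.of_forall fun t => sub_nonneg.2 (hgrowth.le hconv _)) ?_ hdecay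
    filter_upwards [eventually_ge_atTop T] with t ht
    have ht0 : 0 < t := by linarith
    rw [Real.rpow_neg ht0.le, ← div_eq_mul_inv, le_div_iff₀' (by positivity)]
    exact hM t ht
  exact hgrowth.tendsto hconv (tendsto_sub_nhds_zero_iff.1 hgap)

theorem exists_forall_rpow_mul_energy_le_of_balanced (h : IsInertialTrajectory F α θ g T x v)
    (hF : Differentiable ℝ F) (hT : 0 < T) {γ p l K : ℝ} (hγ : 2 < γ) (hl : 0 ≤ l)
    (hpθ : p = (1 + θ) / 2 + l) (hpγ : 2 * p = l * γ) (hα : 0 ≤ α) (hθ : θ ≤ 1) (hK : 0 < K)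
    (hdamp : ∀ t, T ≤ t → (p + l) / t ≤ α / t ^ θ)
    (hgrad : ∀ t, T ≤ t → F (x t) - F z ≤ 1 / γ * ⟪gradient F (x t), x t - z⟫)
    (hgrowth : ∀ t, T ≤ t → K * ‖x t - z‖ ^ γ ≤ F (x t) - F z)
    (hg : IntegrableOn (fun t => t ^ p * ‖g t‖) (Ici T)) :
    ∃ M, ∀ t, T ≤ t →
      t ^ (2 * p) * (F (x t) - F z + ‖driftedVelocity z l x v t‖ ^ 2) ≤ M := by
  have hmin : ∀ t, T ≤ t → F z ≤ F (x t) := fun t ht =>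
    sub_nonneg.1 ((by positivity : 0 ≤ K * ‖x t - z‖ ^ γ).trans (hgrowth t ht))
  obtain ⟨C, hC⟩ := exists_forall_mul_rpow_le_mul_rpow_add (c := l * α / 2) (by positivity)
    (half_pos hK) zero_le_two hγ
  refine h.exists_forall_rpow_mul_energy_le (ψ := 0) (C := C) hF hT hmin hl (by linarith) hdamp
    (fun t ht => ?_) hg integrableOn_zero (fun _ _ => le_rfl) (fun t _ => ?_) fun t ht => ?_
  · calc 2 * p * (F (x t) - F z) ≤ l * γ * (1 / γ * ⟪gradient F (x t), x t - z⟫) := by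
          rw [hpγ]
          gcongr
          exact hgrad t ht
      _ = l * ⟪gradient F (x t), x t - z⟫ := by field_simp
  · rw [show (1 + θ) / 2 + l - p = 0 by linarith, mul_zero, zero_mul, zero_mul, Pi.zero_apply]
  · have ht0 := hT.trans_le ht
    calc l * α / 2 * t ^ (2 * p - θ - 1) * ‖x t - z‖ ^ 2
        = l * α / 2 * (t ^ l * ‖x t - z‖) ^ (2 : ℝ) := by
          rw [Real.mul_rpow (by positivity) (norm_nonneg _), ← Real.rpow_mul ht0.le,
            show 2 * p - θ - 1 = l * 2 by linarith, Real.rpow_two, mul_assoc]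
      _ ≤ K / 2 * (t ^ l * ‖x t - z‖) ^ γ + C := hC _ (by positivity)
      _ = t ^ (2 * p) * (K * ‖x t - z‖ ^ γ) / 2 + C := by
          rw [Real.mul_rpow (by positivity) (norm_nonneg _), ← Real.rpow_mul ht0.le, hpγ]
          ring
      _ ≤ t ^ (2 * p) * (F (x t) - F z) / 2 + C := by
          gcongr
          exact hgrowth t ht

theorem isBigO_velocity_of_balanced (h : IsInertialTrajectory F α θ g T x v)
    (hF : Differentiable ℝ F) (hT : 1 ≤ T) {γ p l K : ℝ} (hγ : 2 < γ) (hl : 0 ≤ l)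
    (hpθ : p = (1 + θ) / 2 + l) (hpγ : 2 * p = l * γ) (hα : 0 ≤ α) (hθ : θ ≤ 1) (hK : 0 < K)
    (hdamp : ∀ t, T ≤ t → (p + l) / t ≤ α / t ^ θ)
    (hgrad : ∀ t, T ≤ t → F (x t) - F z ≤ 1 / γ * ⟪gradient F (x t), x t - z⟫)
    (hgrowth : ∀ t, T ≤ t → K * ‖x t - z‖ ^ γ ≤ F (x t) - F z)
    (hg : IntegrableOn (fun t => t ^ p * ‖g t‖) (Ici T)) :
    v =O[atTop] fun t => t ^ (-p) := by
  obtain ⟨M, hM⟩ := h.exists_forall_rpow_mul_energy_le_of_balanced hF (by linarith) hγ hl hpθ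
    hpγ hα hθ hK hdamp hgrad hgrowth hg
  have hpos : ∀ t, T ≤ t → 0 < t := fun t ht => by linarith
  have hpotential : ∀ t, T ≤ t → K * (t ^ l * ‖x t - z‖) ^ γ ≤ t ^ (2 * p) * (F (x t) - F z) :=
    fun t ht => by
      have ht0 := hpos t ht
      rw [Real.mul_rpow (by positivity) (norm_nonneg _), ← Real.rpow_mul ht0.le, ← hpγ,
        mul_left_comm]
      exact mul_le_mul_of_nonneg_left (hgrowth t ht) (by positivity)
  have hdrift : ∀ t, T ≤ t → t ^ p * ‖driftedVelocity z l x v t‖ ≤ √M := fun t ht => by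
    have ht0 := hpos t ht
    have hgap : 0 ≤ t ^ (2 * p) * (F (x t) - F z) :=
      (by positivity : (0 : ℝ) ≤ _).trans (hpotential t ht)
    refine Real.le_sqrt_of_sq_le ?_
    rw [mul_pow, ← Real.rpow_mul_natCast ht0.le, Nat.cast_ofNat, mul_comm p]
    linarith [hM t ht]
  have hposition : ∀ t, T ≤ t → t ^ l * ‖x t - z‖ ≤ (M / K) ^ γ⁻¹ := fun t ht => by
    have ht0 := hpos t ht
    have hkinetic : 0 ≤ t ^ (2 * p) * ‖driftedVelocity z l x v t‖ ^ 2 := by positivity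
    have hKM : (t ^ l * ‖x t - z‖) ^ γ ≤ M / K :=
      (le_div_iff₀' hK).2 (by linarith [hM t ht, hpotential t ht])
    exact (Real.le_rpow_inv_iff_of_pos (by positivity)
      ((by positivity : (0 : ℝ) ≤ _).trans hKM) (by linarith)).2 hKM
  exact isBigO_velocity_of_driftedVelocity_le hT hl (by linarith) hdrift hposition

end IsInertialTrajectory

theorem eventually_div_le_div_rpow {α θ c : ℝ} (hα : 0 < α)
    (hcase : θ = 1 ∧ c ≤ α ∨ θ < 1) :
    ∀ᶠ t in atTop, c / t ≤ α / t ^ θ := by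
  rcases hcase with ⟨rfl, hc⟩ | hθ
  · filter_upwards [eventually_gt_atTop 0] with t ht
    rw [Real.rpow_one]
    gcongr
  · filter_upwards [eventually_gt_atTop 0,
      (tendsto_rpow_atTop (sub_pos.2 hθ)).eventually_ge_atTop (c / α)] with t ht hct
    rw [Real.rpow_sub ht, Real.rpow_one, div_le_div_iff₀ hα (by positivity)] at hct
    rw [div_le_div_iff₀ ht (by positivity), mul_comm α]
    exact hct

theorem IsInertialTrajectory.isBigO_velocity (h : IsInertialTrajectory F α θ g T x v)
    (hF : Differentiable ℝ F) (hconv : ConvexOn ℝ univ F) {γ : ℝ} (hγ : 2 < γ)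
    (hgrowth : HasGrowthAt F γ z)
    (hgrad : ∀ᶠ y in 𝓝 z, F y - F z ≤ 1 / γ * ⟪gradient F y, y - z⟫)
    (hα : 0 < α) (hθ : -1 < θ) (hcase : θ = 1 ∧ (γ + 2) / (γ - 2) ≤ α ∨ θ < 1)
    (hg : IntegrableOn (fun t => t ^ ((1 + θ) / 2 * γ / (γ - 2)) * ‖g t‖) (Ici T)) :
    v =O[atTop] fun t => t ^ (-((1 + θ) / 2 * γ / (γ - 2))) := by
  have hγ2 : 0 < γ - 2 := sub_pos.2 hγ
  have hθ0 : 0 < 1 + θ := neg_lt_iff_pos_add'.1 hθ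
  have hθ1 : θ ≤ 1 := hcase.elim (fun h => h.1.le) le_of_lt
  set p := (1 + θ) / 2 * γ / (γ - 2) with hp
  set l := (1 + θ) / (γ - 2) with hl
  have hpθ : p = (1 + θ) / 2 + l := by rw [hp, hl]; field_simp; ring
  have hpγ : 2 * p = l * γ := by rw [hp, hl]; field_simp
  have hdamp : ∀ᶠ t in atTop, (p + l) / t ≤ α / t ^ θ := by
    refine eventually_div_le_div_rpow hα (hcase.imp_left fun ⟨hθ_eq, hc⟩ => ⟨hθ_eq, ?_⟩)
    refine (le_of_eq ?_).trans hc
    rw [hp, hl, hθ_eq]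
    field_simp
    ring
  obtain ⟨T₁, hT₁, hTT₁⟩ : ∃ T₁, 1 ≤ T₁ ∧ T ≤ T₁ := ⟨max 1 T, le_max_left _ _, le_max_right _ _⟩
  have hx : Tendsto x atTop (𝓝 z) := (h.mono hTT₁).tendsto_position hF hconv hgrowth hα hθ hθ1 hT₁
    (by positivity) (hg.mono_set (Ici_subset_Ici.2 hTT₁))
  obtain ⟨K, hK, hgrowthK⟩ := hgrowth
  obtain ⟨S, hS⟩ := eventually_atTop.1
    (hdamp.and ((hx.eventually hgrad).and (hx.eventually hgrowthK)))
  have hTS : T ≤ max T₁ S := hTT₁.trans (le_max_left _ _)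
  have htail : ∀ t, max T₁ S ≤ t → S ≤ t := fun t => (le_max_right _ _).trans
  exact (h.mono hTS).isBigO_velocity_of_balanced hF (hT₁.trans (le_max_left _ _)) hγ
    (by positivity) hpθ hpγ hα.le hθ1 hK
    (fun t ht => (hS t (htail t ht)).1) (fun t ht => (hS t (htail t ht)).2.1)
    (fun t ht => (hS t (htail t ht)).2.2) (hg.mono_set (Ici_subset_Ici.2 hTS))

end Inertial

theorem stmt_11_general {H : Type*} [NormedAddCommGroup H] [InnerProductSpace ℝ H] [CompleteSpace H]
    {F : H → ℝ} (hF : Differentiable ℝ F) (hconv : ConvexOn ℝ univ F) {z : H} {γ : ℝ} (hγ : 2 < γ)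
    (hgrowth : HasGrowthAt F γ z)
    (hgrad : ∀ᶠ y in 𝓝 z, F y - F z ≤ 1 / γ * ⟪gradient F y, y - z⟫)
    {α θ : ℝ} (hα : 0 < α) (hcase : θ = 1 ∧ (γ + 2) / (γ - 2) ≤ α ∨ θ < 1)
    {t₀ : ℝ} {g x v : ℝ → H} (h : IsInertialTrajectory F α θ g t₀ x v)
    (hg : IntegrableOn (fun t => t ^ ((1 + θ) / 2 * γ / (γ - 2)) * ‖g t‖) (Ici t₀))
    (hexp : 1 < (1 + θ) / 2 * γ / (γ - 2)) :
    IntegrableOn (fun t => ‖v t‖) (Ici t₀) := by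
  have hγ2 : 0 < γ - 2 := sub_pos.2 hγ
  have hθ : -1 < θ := by
    rw [one_lt_div hγ2] at hexp
    nlinarith
  have hcont : ContinuousOn v (Ici t₀) := fun t ht =>
    (h.hasDerivAt_velocity t ht).continuousAt.continuousWithinAt
  refine (hcont.norm.locallyIntegrableOn measurableSet_Ici).integrableOn_of_isBigO_atTop
    (h.isBigO_velocity hF hconv hγ hgrowth hgrad hα hθ hcase hg).norm_left
    (integrableAtFilter_rpow_atTop_iff.2 (neg_lt_neg hexp))

theorem stmt_11
    {n : ℕ} (hn : 1 ≤ n)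
    (F : EuclideanSpace ℝ (Fin n) → ℝ) (Fstar : ℝ)
    (Xstar : Set (EuclideanSpace ℝ (Fin n)))
    (hXstar : Xstar = {z | ∀ y, F z ≤ F y})
    (hne : Xstar.Nonempty)
    (hFstar : ∀ z ∈ Xstar, F z = Fstar)
    (hconv : ConvexOn ℝ Set.univ F)
    (hdiff : Differentiable ℝ F)
    (α t₀ θ γ r : ℝ) (hα : 0 < α) (ht₀ : 0 < t₀) (hθ : 0 ≤ θ) (hθ1 : θ ≤ 1)
    (hγ : 2 < γ) (hr : r = (1 + θ) / 2)
    (g x x' x'' : ℝ → EuclideanSpace ℝ (Fin n))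
    (hg : ContinuousOn g (Set.Ici t₀))
    (hx : ∀ t ∈ Set.Ici t₀, HasDerivAt x (x' t) t)
    (hx'd : ∀ t ∈ Set.Ici t₀, HasDerivAt x' (x'' t) t)
    (hx''c : ContinuousOn x'' (Set.Ici t₀))
    (hode : ∀ t ∈ Set.Ici t₀, x'' t + (α / t ^ θ) • x' t + gradient F (x t) = g t)
    (hH1 : ∀ z ∈ Xstar, ∃ η > 0, ∀ y : EuclideanSpace ℝ (Fin n),
      ‖y - z‖ < η → F y - Fstar ≤ (1 / γ) * ⟪gradient F y, y - z⟫)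
    (hH2 : ∀ z ∈ Xstar, ∃ K > 0, ∃ ε > 0, ∀ y : EuclideanSpace ℝ (Fin n),
      ‖y - z‖ < ε → K * Metric.infDist y Xstar ^ (γ : ℝ) ≤ F y - Fstar)
    (huniq : ∃ z, Xstar = {z})
    (hint : IntegrableOn (fun t : ℝ => t ^ (r * γ / (γ - 2)) * ‖g t‖) (Set.Ici t₀))
    (hcase : (θ = 1 ∧ (γ + 2) / (γ - 2) ≤ α) ∨ θ < 1)
    (hexp : 1 < r * γ / (γ - 2)) :
    IntegrableOn (fun t : ℝ => ‖x' t‖) (Set.Ici t₀) := by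
  obtain ⟨z, rfl⟩ := huniq
  obtain rfl := hFstar z rfl
  subst hr
  obtain ⟨η, hη, hgrad⟩ := hH1 z rfl
  obtain ⟨K, hK, ε, hε, hgrowth⟩ := hH2 z rfl
  have hgrowthAt : HasGrowthAt F γ z := ⟨K, hK, Metric.eventually_nhds_iff.2 ⟨ε, hε, fun y hy => by
    simpa only [Metric.infDist_singleton, dist_eq_norm] using hgrowth y (dist_eq_norm y z ▸ hy)⟩⟩
  have htraj : IsInertialTrajectory F α θ g t₀ x x' :=
    ⟨hx, fun t ht => (hx'd t ht).congr_deriv (by rw [← hode t ht]; abel)⟩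
  exact stmt_11_general hdiff hconv hγ hgrowthAt (Metric.eventually_nhds_iff.2
    ⟨η, hη, fun y hy => hgrad y (dist_eq_norm y z ▸ hy)⟩) hα hcase htraj hint hexp
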